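/- Under the hypotheses of the MMV-FACS error bound, assume additionally ‖X_{T̂_iᶜ,:}‖_F ≠ 0 and ‖X_{Γᶜ,:}‖_F ≠ 0, and set η_i = ‖X_{Γᶜ,:}‖_F/‖X_{T̂_iᶜ,:}‖_F, ζ = ‖W‖_F/‖X_{Γᶜ,:}‖_F, ξ = (3√(1+δ)+1)·‖X−X^K‖_F/(3‖X_{Γᶜ,:}‖_F) + (√(1+δ)/√(R+K))·‖X−X^K‖_{2,1}/‖X_{Γᶜ,:}‖_F. Then ‖X − X̂‖_F ≤ ((1+δ+3ζ+3ξ)/(1−δ)²)·η_i·‖X − X̂_i‖_F; consequently, if η_i < (1−δ)²/(1+δ+3ζ+3ξ), MMV-FACS achieves SRER gain of at least ((1−δ)²/((1+δ+3ζ+3ξ)η_i))² over the i-th participating algorithm. -/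

import Mathlib

open scoped BigOperators
open Matrix

noncomputable def frob {m n : Type*} [Fintype m] [Fintype n] (X : Matrix m n ℝ) : ℝ :=
  Real.sqrt (∑ i, ∑ j, (X i j) ^ 2)

noncomputable def rowNorm {m n : Type*} [Fintype n] (X : Matrix m n ℝ) (i : m) : ℝ :=
  Real.sqrt (∑ j, (X i j) ^ 2)

noncomputable def norm21 {m n : Type*} [Fintype m] [Fintype n] (X : Matrix m n ℝ) : ℝ :=
  ∑ i, rowNorm X i

noncomputable def restrictRows {m n : Type*} (X : Matrix m n ℝ) (S : Set m) : Matrix m n ℝ :=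
  fun i j => S.indicator (fun i' => X i' j) i

noncomputable def vnorm {m : Type*} [Fintype m] (v : m → ℝ) : ℝ :=
  Real.sqrt (∑ i, (v i) ^ 2)

/-- `X` has at most `s` nonzero rows. -/
def rowSparse {m n : Type*} (X : Matrix m n ℝ) (s : ℕ) : Prop :=
  {i | X i ≠ 0}.ncard ≤ s

/-- Column submatrix of `A` with columns indexed by `S`. -/
def colSub {M N : ℕ} (A : Matrix (Fin M) (Fin N) ℝ) (S : Finset (Fin N)) :
    Matrix (Fin M) {j // j ∈ S} ℝ :=
  A.submatrix id (fun j => (j : Fin N))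

/-- `D` is the Moore–Penrose pseudo-inverse of `A` (the four Penrose conditions). -/
def IsPinv {m n : Type*} [Fintype m] [Fintype n] (A : Matrix m n ℝ) (D : Matrix n m ℝ) : Prop :=
  A * D * A = A ∧ D * A * D = D ∧ (A * D)ᵀ = A * D ∧ (D * A)ᵀ = D * A

/-- Restricted isometry property of order `s` with constant `δ`. -/
def RIP {M N : ℕ} (A : Matrix (Fin M) (Fin N) ℝ) (s : ℕ) (δ : ℝ) : Prop :=
  ∀ x : Fin N → ℝ, {i | x i ≠ 0}.ncard ≤ s →
    (1 - δ) * (∑ i, (x i) ^ 2) ≤ (∑ i, (A.mulVec x i) ^ 2) ∧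
      (∑ i, (A.mulVec x i) ^ 2) ≤ (1 + δ) * (∑ i, (x i) ^ 2)

/-! ### Frobenius norm -/

lemma frob_nonneg {m n : Type*} [Fintype m] [Fintype n] (X : Matrix m n ℝ) : 0 ≤ frob X :=
  Real.sqrt_nonneg _

lemma rowNorm_nonneg {m n : Type*} [Fintype n] (X : Matrix m n ℝ) (i : m) : 0 ≤ rowNorm X i :=
  Real.sqrt_nonneg _

lemma rowNorm_sq {m n : Type*} [Fintype n] (X : Matrix m n ℝ) (i : m) :
    rowNorm X i ^ 2 = ∑ j, X i j ^ 2 :=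
  Real.sq_sqrt (Finset.sum_nonneg fun _ _ => sq_nonneg _)

lemma frob_sq {m n : Type*} [Fintype m] [Fintype n] (X : Matrix m n ℝ) :
    frob X ^ 2 = ∑ i, ∑ j, X i j ^ 2 :=
  Real.sq_sqrt (Finset.sum_nonneg fun _ _ => Finset.sum_nonneg fun _ _ => sq_nonneg _)

lemma frob_sq_eq_sum_rowNorm_sq {m n : Type*} [Fintype m] [Fintype n] (X : Matrix m n ℝ) :
    frob X ^ 2 = ∑ i, rowNorm X i ^ 2 := by
  simp only [frob_sq, rowNorm_sq]

/-- A matrix as a vector of a Euclidean space. -/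
noncomputable def euclid {m n : Type*} (X : Matrix m n ℝ) : EuclideanSpace ℝ (m × n) :=
  WithLp.toLp 2 fun p => X p.1 p.2

/-- The Frobenius inner product. -/
def frobInner {m n : Type*} [Fintype m] [Fintype n] (X Y : Matrix m n ℝ) : ℝ :=
  ∑ i, ∑ j, X i j * Y i j

lemma norm_euclid {m n : Type*} [Fintype m] [Fintype n] (X : Matrix m n ℝ) :
    ‖euclid X‖ = frob X := by
  simp [EuclideanSpace.norm_eq, euclid, frob, Fintype.sum_prod_type]

lemma frob_add_le {m n : Type*} [Fintype m] [Fintype n] (X Y : Matrix m n ℝ) :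
    frob (X + Y) ≤ frob X + frob Y := by
  simp only [← norm_euclid]
  exact norm_add_le (euclid X) (euclid Y)

lemma frob_sub_le {m n : Type*} [Fintype m] [Fintype n] (X Y : Matrix m n ℝ) :
    frob (X - Y) ≤ frob X + frob Y := by
  simp only [← norm_euclid]
  exact norm_sub_le (euclid X) (euclid Y)

lemma frobInner_le {m n : Type*} [Fintype m] [Fintype n] (X Y : Matrix m n ℝ) :
    frobInner X Y ≤ frob X * frob Y := by
  have h := real_inner_le_norm (euclid X) (euclid Y)
  rw [norm_euclid, norm_euclid] at h
  convert h using 1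
  simp [euclid, frobInner, PiLp.inner_apply, Fintype.sum_prod_type, mul_comm]

lemma frobInner_self {m n : Type*} [Fintype m] [Fintype n] (X : Matrix m n ℝ) :
    frobInner X X = frob X ^ 2 := by
  rw [frob_sq]
  simp only [frobInner, sq]

lemma frobInner_add_right {m n : Type*} [Fintype m] [Fintype n] (X Y Z : Matrix m n ℝ) :
    frobInner X (Y + Z) = frobInner X Y + frobInner X Z := by
  simp [frobInner, mul_add, Finset.sum_add_distrib]

lemma frobInner_mul_left {l m n : Type*} [Fintype l] [Fintype m] [Fintype n]
    (A : Matrix m l ℝ) (X : Matrix l n ℝ) (Y : Matrix m n ℝ) :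
    frobInner (A * X) Y = frobInner X (Aᵀ * Y) := by
  have trace_eq {p : Type _} [Fintype p] (U V : Matrix p n ℝ) :
      frobInner U V = (Uᵀ * V).trace := by
    simp only [frobInner, Matrix.trace, Matrix.diag, Matrix.mul_apply, Matrix.transpose_apply]
    exact Finset.sum_comm
  rw [trace_eq, Matrix.transpose_mul, Matrix.mul_assoc]
  simp only [frobInner, Matrix.trace, Matrix.diag, Matrix.mul_apply (M := Xᵀ),
    Matrix.transpose_apply]
  exact Finset.sum_comm

lemma frob_sq_smul_add_smul {m n : Type*} [Fintype m] [Fintype n] (a b : ℝ)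
    (X Y : Matrix m n ℝ) :
    frob (a • X + b • Y) ^ 2 =
      a ^ 2 * frob X ^ 2 + 2 * a * b * frobInner X Y + b ^ 2 * frob Y ^ 2 := by
  simp only [frob_sq, frobInner, Finset.mul_sum, ← Finset.sum_add_distrib]
  refine Finset.sum_congr rfl fun i _ => Finset.sum_congr rfl fun j _ => ?_
  simp only [Matrix.add_apply, Matrix.smul_apply, smul_eq_mul]
  ring

lemma eq_zero_of_frob_eq_zero {m n : Type*} [Fintype m] [Fintype n] {X : Matrix m n ℝ}
    (h : frob X = 0) : X = 0 := by
  rw [← norm_euclid, norm_eq_zero] at h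
  ext i j
  exact congrArg (fun v : EuclideanSpace ℝ (m × n) => v (i, j)) h

/-! ### Row restrictions -/

lemma restrictRows_apply_of_mem {m n : Type*} (X : Matrix m n ℝ) {S : Set m} {i : m}
    (h : i ∈ S) : restrictRows X S i = X i := by
  ext j
  simp [restrictRows, h]

lemma restrictRows_apply_of_notMem {m n : Type*} (X : Matrix m n ℝ) {S : Set m} {i : m}
    (h : i ∉ S) : restrictRows X S i = 0 := by
  ext j
  simp [restrictRows, h]

lemma restrictRows_univ {m n : Type*} (X : Matrix m n ℝ) : restrictRows X Set.univ = X := by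
  ext i j
  simp [restrictRows]

lemma frob_sq_restrictRows {m n : Type*} [Fintype m] [Fintype n] (X : Matrix m n ℝ)
    (U : Finset m) :
    frob (restrictRows X (U : Set m)) ^ 2 = ∑ i ∈ U, rowNorm X i ^ 2 := by
  classical
  rw [frob_sq_eq_sum_rowNorm_sq, ← Finset.sum_subset (Finset.subset_univ U)]
  · refine Finset.sum_congr rfl fun i hi => ?_
    simp only [rowNorm, restrictRows_apply_of_mem X (Finset.mem_coe.2 hi)]
  · intro i _ hi
    simp [rowNorm, restrictRows_apply_of_notMem X (mt Finset.mem_coe.1 hi)]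

lemma frob_le_frob_of_rowNorm_le {m n : Type*} [Fintype m] [Fintype n] {X Y : Matrix m n ℝ}
    (h : ∀ i, rowNorm X i ≤ rowNorm Y i) :
    frob X ≤ frob Y := by
  refine le_of_sq_le_sq ?_ (frob_nonneg Y)
  rw [frob_sq_eq_sum_rowNorm_sq, frob_sq_eq_sum_rowNorm_sq]
  exact Finset.sum_le_sum fun i _ => pow_le_pow_left₀ (rowNorm_nonneg _ _) (h i) 2

lemma rowNorm_restrictRows_le {m n : Type*} [Fintype n] (X : Matrix m n ℝ) (S : Set m) (i : m) :
    rowNorm (restrictRows X S) i ≤ rowNorm X i := by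
  by_cases h : i ∈ S
  · simp only [rowNorm, restrictRows_apply_of_mem X h, le_refl]
  · simp [rowNorm, restrictRows_apply_of_notMem X h]

lemma frob_restrictRows_le {m n : Type*} [Fintype m] [Fintype n] (X : Matrix m n ℝ)
    (S : Set m) : frob (restrictRows X S) ≤ frob X :=
  frob_le_frob_of_rowNorm_le (rowNorm_restrictRows_le X S)

lemma restrictRows_add_restrictRows {m n : Type*} (X : Matrix m n ℝ) {S T U : Set m}
    (hd : Disjoint S T) (hU : ∀ i, X i ≠ 0 → (i ∈ U ↔ i ∈ S ∪ T)) :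
    restrictRows X S + restrictRows X T = restrictRows X U := by
  classical
  ext i j
  have hST : i ∈ S → i ∉ T := fun h h' => Set.disjoint_left.1 hd h h'
  by_cases hX : X i = 0
  · simp [restrictRows, Set.indicator_apply, hX]
  · have h := hU i hX
    rw [Set.mem_union] at h
    simp only [restrictRows, Set.indicator_apply, Matrix.add_apply]
    by_cases hS : i ∈ S <;> by_cases hT : i ∈ T <;> simp_all

lemma restrictRows_add_restrictRows_compl {m n : Type*} [Fintype m] [DecidableEq m]
    (X : Matrix m n ℝ) (U : Finset m) :
    restrictRows X (U : Set m) + restrictRows X ((Uᶜ : Finset m) : Set m) = X := by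
  rw [restrictRows_add_restrictRows (U := Set.univ) X
    (Finset.disjoint_coe.2 disjoint_compl_right) (fun i _ => by simp), restrictRows_univ]

/-! ### Comparing sums over finsets, and largest entries -/

lemma sum_le_sum_of_card_le {ι : Type*} {P Q : Finset ι} {f : ι → ℝ} (hf : ∀ i, 0 ≤ f i)
    (hcard : P.card ≤ Q.card) (h : ∀ i ∈ Q, ∀ j ∈ P, f j ≤ f i) :
    ∑ j ∈ P, f j ≤ ∑ i ∈ Q, f i := by
  rcases P.eq_empty_or_nonempty with rfl | hP
  · simpa using Finset.sum_nonneg fun i _ => hf i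
  obtain ⟨k, hk, hmax⟩ := P.exists_max_image f hP
  calc ∑ j ∈ P, f j ≤ P.card • f k := Finset.sum_le_card_nsmul _ _ _ hmax
    _ ≤ Q.card • f k := nsmul_le_nsmul_left (hf k) hcard
    _ ≤ ∑ i ∈ Q, f i := Finset.card_nsmul_le_sum _ _ _ fun i hi => h i hi k hk

lemma exists_largest_subset {ι : Type*} [DecidableEq ι] (f : ι → ℝ) (U : Finset ι) (s : ℕ)
    (hs : s ≤ U.card) :
    ∃ T ⊆ U, T.card = s ∧ ∀ i ∈ T, ∀ j ∈ U \ T, f j ≤ f i := by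
  induction s with
  | zero => exact ⟨∅, by simp⟩
  | succ s ih =>
    obtain ⟨T, hTU, hT, hmax⟩ := ih (by omega)
    have hne : (U \ T).Nonempty := by
      rw [← Finset.card_pos, Finset.card_sdiff_of_subset hTU]
      omega
    obtain ⟨k, hk, hkmax⟩ := (U \ T).exists_max_image f hne
    have hk' := Finset.mem_sdiff.1 hk
    refine ⟨insert k T, Finset.insert_subset hk'.1 hTU, ?_, ?_⟩
    · rw [Finset.card_insert_of_notMem hk'.2, hT]
    · intro i hi j hj
      have hjT : j ∈ U \ T := by
        simp only [Finset.mem_sdiff, Finset.mem_insert, not_or] at hj ⊢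
        exact ⟨hj.1, hj.2.2⟩
      rcases Finset.mem_insert.1 hi with rfl | hi
      · exact hkmax j hjT
      · exact hmax i hi j hjT

/-! ### Consequences of the restricted isometry property -/

section RIP

variable {M N L s : ℕ} {A : Matrix (Fin M) (Fin N) ℝ} {δ : ℝ}

lemma RIP.frob_bounds (h : RIP A s δ) {X : Matrix (Fin N) (Fin L) ℝ} {U : Finset (Fin N)}
    (hU : U.card ≤ s) (hX : ∀ i ∉ U, X i = 0) :
    (1 - δ) * frob X ^ 2 ≤ frob (A * X) ^ 2 ∧ frob (A * X) ^ 2 ≤ (1 + δ) * frob X ^ 2 := by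
  have key (j : Fin L) := h (fun i => X i j) (by
    refine le_trans ?_ hU
    rw [← Set.ncard_coe_finset U]
    refine Set.ncard_le_ncard (fun i hi => ?_) U.finite_toSet
    by_contra hiU
    exact hi (congrFun (hX i hiU) j))
  have hX2 : frob X ^ 2 = ∑ j, ∑ i, X i j ^ 2 := by rw [frob_sq, Finset.sum_comm]
  have hAX2 : frob (A * X) ^ 2 = ∑ j, ∑ i, A.mulVec (fun k => X k j) i ^ 2 := by
    rw [frob_sq, Finset.sum_comm]
    rfl
  rw [hX2, hAX2, Finset.mul_sum, Finset.mul_sum]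
  exact ⟨Finset.sum_le_sum fun j _ => (key j).1, Finset.sum_le_sum fun j _ => (key j).2⟩

lemma RIP.frob_mul_le (h : RIP A s δ) {X : Matrix (Fin N) (Fin L) ℝ} {U : Finset (Fin N)}
    (hδ0 : 0 ≤ δ) (hU : U.card ≤ s) (hX : ∀ i ∉ U, X i = 0) :
    frob (A * X) ≤ √(1 + δ) * frob X := by
  refine le_of_sq_le_sq ?_ (mul_nonneg (Real.sqrt_nonneg _) (frob_nonneg X))
  rw [mul_pow, Real.sq_sqrt (by linarith)]
  exact (h.frob_bounds hU hX).2

/-- Near-orthogonality of the images of matrices with disjoint row supports. -/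
lemma RIP.frobInner_mul_le (h : RIP A s δ) {X Y : Matrix (Fin N) (Fin L) ℝ}
    {U : Finset (Fin N)} (hU : U.card ≤ s) (hX : ∀ i ∉ U, X i = 0) (hY : ∀ i ∉ U, Y i = 0)
    (hXY : ∀ i, X i = 0 ∨ Y i = 0) :
    frobInner (A * X) (A * Y) ≤ δ * frob X * frob Y := by
  have horth : frobInner X Y = 0 := by
    refine Finset.sum_eq_zero fun i _ => Finset.sum_eq_zero fun j _ => ?_
    rcases hXY i with h0 | h0 <;> simp [h0]
  rcases (frob_nonneg X).eq_or_lt with hx | hx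
  · simp [eq_zero_of_frob_eq_zero hx.symm, frobInner, frob]
  rcases (frob_nonneg Y).eq_or_lt with hy | hy
  · simp [eq_zero_of_frob_eq_zero hy.symm, frobInner, frob]
  have hsupp (a b : ℝ) : ∀ i ∉ U, (a • X + b • Y) i = 0 := by
    intro i hi
    ext j
    simp [hX i hi, hY i hi]
  have hmul (a b : ℝ) : A * (a • X + b • Y) = a • (A * X) + b • (A * Y) := by
    rw [Matrix.mul_add, Matrix.mul_smul, Matrix.mul_smul]
  have hup := (h.frob_bounds hU (hsupp (frob Y) (frob X))).2
  have hlo := (h.frob_bounds hU (hsupp (frob Y) (-frob X))).1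
  rw [hmul, frob_sq_smul_add_smul, frob_sq_smul_add_smul, horth] at hup hlo
  refine le_of_mul_le_mul_left ?_ (mul_pos hx hy)
  nlinarith

/-- A matrix with the restricted isometry property acts boundedly on all of the space, with
respect to a combination of the Frobenius norm and the `(2,1)`-norm. -/
lemma RIP.frob_mul_restrictRows_le (h : RIP A s δ) (hδ0 : 0 ≤ δ) (hs : 0 < s)
    (X : Matrix (Fin N) (Fin L) ℝ) (U : Finset (Fin N)) (c : ℝ)
    (hc : ∀ T ⊆ U, T.card ≤ s → frob (restrictRows X (T : Set (Fin N))) ≤ c) :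
    frob (A * restrictRows X (U : Set (Fin N))) ≤
      √(1 + δ) * (c + (∑ i ∈ U, rowNorm X i) / √s) := by
  have hrt : 0 < √(s : ℝ) := Real.sqrt_pos.2 (by exact_mod_cast hs)
  have hrt2 : √(s : ℝ) * √s = s := Real.mul_self_sqrt (Nat.cast_nonneg s)
  have hsupp (T : Finset (Fin N)) : ∀ i ∉ T, restrictRows X (T : Set (Fin N)) i = 0 :=
    fun i hi => restrictRows_apply_of_notMem X (mt Finset.mem_coe.1 hi)
  induction U using Finset.strongInduction generalizing c with
  | H U ih =>
    by_cases hUs : U.card ≤ s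
    · refine (h.frob_mul_le hδ0 hUs (hsupp U)).trans ?_
      refine mul_le_mul_of_nonneg_left ?_ (Real.sqrt_nonneg _)
      have h0 : 0 ≤ (∑ i ∈ U, rowNorm X i) / √s :=
        div_nonneg (Finset.sum_nonneg fun i _ => rowNorm_nonneg X i) hrt.le
      linarith [hc U subset_rfl hUs]
    obtain ⟨T, hTU, hT, hmax⟩ := exists_largest_subset (rowNorm X) U s (by omega)
    have hTne : T.Nonempty := Finset.card_pos.1 (by omega)
    obtain ⟨k, hk, hkmin⟩ := T.exists_min_image (rowNorm X) hTne
    have hrest := ih (U \ T) (Finset.sdiff_ssubset hTU hTne) ((∑ i ∈ T, rowNorm X i) / √s) (by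
      intro T' hT' hT's
      have hsum : (s : ℝ) * rowNorm X k ≤ ∑ i ∈ T, rowNorm X i := by
        have := Finset.card_nsmul_le_sum T (rowNorm X) (rowNorm X k) hkmin
        rwa [hT, nsmul_eq_mul] at this
      have hF : frob (restrictRows X (T' : Set (Fin N))) ≤ √s * rowNorm X k := by
        refine le_of_sq_le_sq ?_ (mul_nonneg hrt.le (rowNorm_nonneg X k))
        rw [frob_sq_restrictRows, mul_pow, Real.sq_sqrt (Nat.cast_nonneg s)]
        have hle := Finset.sum_le_card_nsmul T' (fun i => rowNorm X i ^ 2) (rowNorm X k ^ 2)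
          fun i hi => pow_le_pow_left₀ (rowNorm_nonneg X i) (hmax k hk i (hT' hi)) 2
        rw [nsmul_eq_mul] at hle
        exact hle.trans (mul_le_mul_of_nonneg_right (by exact_mod_cast hT's) (sq_nonneg _))
      rw [le_div_iff₀ hrt]
      calc _ ≤ √s * rowNorm X k * √s := mul_le_mul_of_nonneg_right hF hrt.le
        _ = s * rowNorm X k := by rw [mul_right_comm, hrt2]
        _ ≤ _ := hsum)
    have htop := h.frob_mul_le hδ0 hT.le (hsupp T)
    have hsplit : restrictRows X (T : Set (Fin N)) +
        restrictRows X ((U \ T : Finset (Fin N)) : Set (Fin N)) =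
          restrictRows X (U : Set (Fin N)) := by
      refine restrictRows_add_restrictRows X
        (Finset.disjoint_coe.2 Finset.disjoint_sdiff) fun i _ => ?_
      rw [← Finset.coe_union, Finset.union_sdiff_of_subset hTU]
    have hcT := mul_le_mul_of_nonneg_left (hc T hTU hT.le) (Real.sqrt_nonneg (1 + δ))
    rw [← hsplit, Matrix.mul_add, ← Finset.sum_sdiff hTU, add_div]
    refine (frob_add_le _ _).trans ?_
    linarith

lemma RIP.frob_mul_le_add_norm21 (h : RIP A s δ) (hδ0 : 0 ≤ δ) (hs : 0 < s)
    (X : Matrix (Fin N) (Fin L) ℝ) :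
    frob (A * X) ≤ √(1 + δ) * (frob X + norm21 X / √s) := by
  have := h.frob_mul_restrictRows_le hδ0 hs X Finset.univ (frob X)
    fun T _ _ => frob_restrictRows_le X _
  simpa [restrictRows_univ, norm21] using this

end RIP

/-! ### Least squares on a row support -/

section LeastSquares

variable {M N L s : ℕ} {A : Matrix (Fin M) (Fin N) ℝ} {δ : ℝ}

/-- Rows of `Y` placed at the indices in `U`, zero elsewhere. -/
def extendRows (U : Finset (Fin N)) (Y : Matrix {j // j ∈ U} (Fin L) ℝ) :
    Matrix (Fin N) (Fin L) ℝ :=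
  fun i j => if h : i ∈ U then Y ⟨i, h⟩ j else 0

lemma mul_eq_colSub_mul {U : Finset (Fin N)} {X : Matrix (Fin N) (Fin L) ℝ}
    (hX : ∀ i ∉ U, X i = 0) :
    A * X = colSub A U * X.submatrix (fun j : {j // j ∈ U} => (j : Fin N)) id := by
  ext i j
  simp only [Matrix.mul_apply, colSub, Matrix.submatrix_apply, id]
  rw [← Finset.sum_subset (Finset.subset_univ U) fun k _ hk => by simp [hX k hk]]
  exact (Finset.sum_coe_sort U fun k => A i k * X k j).symm

/-- The normal equations satisfied by the pseudo-inverse solution. -/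
lemma IsPinv.transpose_mul_residual {m n p : Type*} [Fintype m] [Fintype n]
    {C : Matrix m n ℝ} {D : Matrix n m ℝ} (h : IsPinv C D) (B : Matrix m p ℝ) :
    Cᵀ * (C * (D * B)) = Cᵀ * B := by
  obtain ⟨h1, -, h3, -⟩ := h
  rw [← Matrix.mul_assoc C D B, ← Matrix.mul_assoc, ← h3, ← Matrix.transpose_mul, h1]

lemma extendRows_apply_of_notMem {U : Finset (Fin N)} (Y : Matrix {j // j ∈ U} (Fin L) ℝ)
    {i : Fin N} (hi : i ∉ U) : extendRows U Y i = 0 := by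
  ext j
  simp [extendRows, hi]

lemma extendRows_submatrix (U : Finset (Fin N)) (Y : Matrix {j // j ∈ U} (Fin L) ℝ) :
    (extendRows U Y).submatrix (fun j : {j // j ∈ U} => (j : Fin N)) id = Y := by
  ext i j
  simp [extendRows]

lemma RIP.frob_leastSquares_sub_le (h : RIP A s δ) (hδ0 : 0 ≤ δ) (hδ : δ < 1)
    {U T : Finset (Fin N)} (hUT : (U ∪ T).card ≤ s) {D : Matrix {j // j ∈ U} (Fin M) ℝ}
    (hD : IsPinv (colSub A U) D) {X : Matrix (Fin N) (Fin L) ℝ} (hX : ∀ i ∉ T, X i = 0)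
    (W : Matrix (Fin M) (Fin L) ℝ) :
    frob (extendRows U (D * (A * X + W)) - restrictRows X (U : Set (Fin N))) ≤
      δ / (1 - δ) * frob (restrictRows X ((Uᶜ : Finset (Fin N)) : Set (Fin N))) +
        frob W / √(1 - δ) := by
  set Z := extendRows U (D * (A * X + W)) with hZ
  set P := restrictRows X (U : Set (Fin N)) with hP
  set Q := restrictRows X ((Uᶜ : Finset (Fin N)) : Set (Fin N)) with hQ
  have hPQ : P + Q = X := restrictRows_add_restrictRows_compl X U
  have hZU : ∀ i ∉ U, Z i = 0 := fun i hi => extendRows_apply_of_notMem _ hi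
  have hPU : ∀ i ∉ U, P i = 0 :=
    fun i hi => restrictRows_apply_of_notMem X (mt Finset.mem_coe.1 hi)
  have hQU : ∀ i ∈ U, Q i = 0 :=
    fun i hi => restrictRows_apply_of_notMem X (by simpa using hi)
  have huU : ∀ i ∉ U, (Z - P) i = 0 := by
    intro i hi
    ext j
    simp [hZU i hi, hPU i hi]
  have hu' : ∀ i ∉ U ∪ T, (Z - P) i = 0 :=
    fun i hi => huU i fun hiU => hi (Finset.mem_union_left T hiU)
  have hQ' : ∀ i ∉ U ∪ T, Q i = 0 := by
    intro i hi
    have hiT : i ∉ T := fun hiT => hi (Finset.mem_union_right U hiT)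
    ext j
    simp [hQ, restrictRows, Set.indicator_apply, hX i hiT]
  have hnormal : frobInner (A * (Z - P)) (A * Z) = frobInner (A * (Z - P)) (A * X + W) := by
    rw [mul_eq_colSub_mul huU, frobInner_mul_left, frobInner_mul_left, mul_eq_colSub_mul hZU,
      hZ, extendRows_submatrix, hD.transpose_mul_residual]
  have hsq : frob (A * (Z - P)) ^ 2 =
      frobInner (A * (Z - P)) (A * Q) + frobInner (A * (Z - P)) W := by
    have hZP : A * Z = A * (Z - P) + A * P := by rw [← Matrix.mul_add, sub_add_cancel]
    have hXW : A * X + W = A * P + (A * Q + W) := by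
      rw [← add_assoc, ← Matrix.mul_add, hPQ]
    rw [hZP, hXW] at hnormal
    simp only [frobInner_add_right] at hnormal
    rw [← frobInner_self]
    linarith
  have horth := h.frobInner_mul_le hUT hu' hQ' (fun i => by
    by_cases hi : i ∈ U
    · exact Or.inr (hQU i hi)
    · exact Or.inl (huU i hi))
  have hcs := frobInner_le (A * (Z - P)) W
  have hlow := (h.frob_bounds hUT hu').1
  have hr : 0 < √(1 - δ) := Real.sqrt_pos.2 (by linarith)
  have hr2 : √(1 - δ) ^ 2 = 1 - δ := Real.sq_sqrt (by linarith)
  have hp := frob_nonneg Q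
  have hw := frob_nonneg W
  have hle : √(1 - δ) * frob (Z - P) ≤ frob (A * (Z - P)) :=
    le_of_sq_le_sq (by rwa [mul_pow, hr2]) (frob_nonneg _)
  have hmain : √(1 - δ) * frob (A * (Z - P)) ≤ δ * frob Q + √(1 - δ) * frob W := by
    rcases (frob_nonneg (A * (Z - P))).eq_or_lt with h0 | h0
    · rw [← h0, mul_zero]
      positivity
    refine le_of_mul_le_mul_left ?_ h0
    have h1 := mul_le_mul_of_nonneg_left hle (mul_nonneg hδ0 hp)
    have h2 := mul_le_mul_of_nonneg_left (hsq.le.trans (add_le_add horth hcs)) hr.le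
    linarith
  have hfin : √(1 - δ) ^ 2 * frob (Z - P) ≤ δ * frob Q + √(1 - δ) * frob W := by
    have h1 := mul_le_mul_of_nonneg_left hle hr.le
    linarith
  have heq : δ / (1 - δ) * frob Q + frob W / √(1 - δ) =
      (δ * frob Q + √(1 - δ) * frob W) / √(1 - δ) ^ 2 := by
    rw [show δ / (1 - δ) = δ / √(1 - δ) ^ 2 by rw [hr2]]
    field_simp
  rw [heq, le_div_iff₀ (by positivity)]
  linarith

lemma RIP.frob_sub_leastSquares_le (h : RIP A s δ) (hδ0 : 0 ≤ δ) (hδ : δ < 1)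
    {U T : Finset (Fin N)} (hUT : (U ∪ T).card ≤ s) {D : Matrix {j // j ∈ U} (Fin M) ℝ}
    (hD : IsPinv (colSub A U) D) {X : Matrix (Fin N) (Fin L) ℝ} (hX : ∀ i ∉ T, X i = 0)
    (W : Matrix (Fin M) (Fin L) ℝ) :
    frob (X - extendRows U (D * (A * X + W))) ≤
      1 / (1 - δ) * frob (restrictRows X ((Uᶜ : Finset (Fin N)) : Set (Fin N))) +
        frob W / √(1 - δ) := by
  have hls := h.frob_leastSquares_sub_le hδ0 hδ hUT hD hX W
  have hsplit := restrictRows_add_restrictRows_compl X U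
  have htri := frob_sub_le (restrictRows X ((Uᶜ : Finset (Fin N)) : Set (Fin N)))
    (extendRows U (D * (A * X + W)) - restrictRows X (U : Set (Fin N)))
  have heq : X - extendRows U (D * (A * X + W)) =
      restrictRows X ((Uᶜ : Finset (Fin N)) : Set (Fin N)) -
        (extendRows U (D * (A * X + W)) - restrictRows X (U : Set (Fin N))) := by
    nth_rw 1 [← hsplit]
    abel
  have hone : 1 / (1 - δ) = 1 + δ / (1 - δ) := by
    field_simp [(by linarith : (1 - δ) ≠ 0)]
    ring
  rw [heq, hone]
  linarith

/-- The rows missed by the `K` largest rows of the least-squares solution on `Γ`. -/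
lemma RIP.frob_restrictRows_compl_le (h : RIP A s δ) (hδ0 : 0 ≤ δ) (hδ : δ < 1)
    {Γ T That : Finset (Fin N)} (hΓT : (Γ ∪ T).card ≤ s)
    {D : Matrix {j // j ∈ Γ} (Fin M) ℝ} (hD : IsPinv (colSub A Γ) D)
    {X : Matrix (Fin N) (Fin L) ℝ} (hX : ∀ i ∉ T, X i = 0) (W : Matrix (Fin M) (Fin L) ℝ)
    (hThatΓ : That ⊆ Γ) (hcard : T.card = That.card)
    (hsel : ∀ i ∈ That, ∀ j ∉ That, rowNorm (extendRows Γ (D * (A * X + W))) j ≤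
      rowNorm (extendRows Γ (D * (A * X + W))) i) :
    frob (restrictRows X ((Thatᶜ : Finset (Fin N)) : Set (Fin N))) ≤
      (1 + δ) / (1 - δ) * frob (restrictRows X ((Γᶜ : Finset (Fin N)) : Set (Fin N))) +
        2 * (frob W / √(1 - δ)) := by
  have hls := h.frob_leastSquares_sub_le hδ0 hδ hΓT hD hX W
  set V := extendRows Γ (D * (A * X + W))
  set E := V - restrictRows X (Γ : Set (Fin N)) with hE
  set P : Finset (Fin N) := (T ∩ Γ) \ That with hP
  set Q : Finset (Fin N) := That \ T with hQ
  have hsplit : restrictRows X ((Γᶜ : Finset (Fin N)) : Set (Fin N)) +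
      restrictRows X (P : Set (Fin N)) =
        restrictRows X ((Thatᶜ : Finset (Fin N)) : Set (Fin N)) := by
    refine restrictRows_add_restrictRows X ?_ fun i hi => ?_
    · rw [Finset.disjoint_coe, Finset.disjoint_left]
      intro i hi hi'
      simp only [hP, Finset.mem_sdiff, Finset.mem_inter, Finset.mem_compl] at hi hi'
      exact hi hi'.1.2
    · have hiT : i ∈ T := by_contra fun hiT => hi (hX i hiT)
      have := @hThatΓ i
      simp only [hP, Set.mem_union, Finset.mem_coe, Finset.mem_sdiff, Finset.mem_inter,
        Finset.mem_compl]
      tauto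
  have hXP : restrictRows X (P : Set (Fin N)) =
      restrictRows V (P : Set (Fin N)) - restrictRows E (P : Set (Fin N)) := by
    ext i j
    by_cases hi : i ∈ P
    · have hiΓ : i ∈ Γ := by
        simp only [hP, Finset.mem_sdiff, Finset.mem_inter] at hi
        exact hi.1.2
      simp [restrictRows, hE, hi, hiΓ]
    · simp [restrictRows, hi]
  have hVQ : restrictRows V (Q : Set (Fin N)) = restrictRows E (Q : Set (Fin N)) := by
    ext i j
    by_cases hi : i ∈ Q
    · have hiT : i ∉ T := (Finset.mem_sdiff.1 hi).2
      simp [restrictRows, hE, hi, Set.indicator_apply, hX i hiT]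
    · simp [restrictRows, hi]
  have hPQ : P.card ≤ Q.card := by
    have h1 : P.card ≤ (T \ That).card :=
      Finset.card_le_card (Finset.sdiff_subset_sdiff Finset.inter_subset_left subset_rfl)
    have h2 := Finset.card_sdiff_add_card_inter T That
    have h3 := Finset.card_sdiff_add_card_inter That T
    rw [Finset.inter_comm, ← hQ] at h3
    omega
  have hVPQ : frob (restrictRows V (P : Set (Fin N))) ≤
      frob (restrictRows V (Q : Set (Fin N))) := by
    refine le_of_sq_le_sq ?_ (frob_nonneg _)
    rw [frob_sq_restrictRows, frob_sq_restrictRows]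
    refine sum_le_sum_of_card_le (fun i => sq_nonneg _) hPQ fun i hi j hj => ?_
    exact pow_le_pow_left₀ (rowNorm_nonneg _ _)
      (hsel i (Finset.mem_sdiff.1 hi).1 j (Finset.mem_sdiff.1 hj).2) 2
  have h1 := frob_add_le (restrictRows X ((Γᶜ : Finset (Fin N)) : Set (Fin N)))
    (restrictRows X (P : Set (Fin N)))
  have h2 := frob_sub_le (restrictRows V (P : Set (Fin N))) (restrictRows E (P : Set (Fin N)))
  rw [hsplit] at h1
  rw [← hXP] at h2
  rw [hVQ] at hVPQ
  have h3 := frob_restrictRows_le E (P : Set (Fin N))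
  have h4 := frob_restrictRows_le E (Q : Set (Fin N))
  have hone : (1 + δ) / (1 - δ) = 1 + 2 * (δ / (1 - δ)) := by
    field_simp [(by linarith : (1 - δ) ≠ 0)]
    ring
  rw [hone]
  linarith

/-- Fusing the candidate support `Γ` of a row-sparse signal: error of the final least-squares
estimate. -/
lemma RIP.frob_sub_fusion_le (h : RIP A s δ) (hδ0 : 0 ≤ δ) (hδ : δ < 1)
    {Γ T That : Finset (Fin N)} (hΓT : (Γ ∪ T).card ≤ s)
    {DΓ : Matrix {j // j ∈ Γ} (Fin M) ℝ} (hDΓ : IsPinv (colSub A Γ) DΓ)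
    {X : Matrix (Fin N) (Fin L) ℝ} (hX : ∀ i ∉ T, X i = 0) (W : Matrix (Fin M) (Fin L) ℝ)
    (hThatΓ : That ⊆ Γ) (hcard : T.card = That.card)
    (hsel : ∀ i ∈ That, ∀ j ∉ That, rowNorm (extendRows Γ (DΓ * (A * X + W))) j ≤
      rowNorm (extendRows Γ (DΓ * (A * X + W))) i)
    {DT : Matrix {j // j ∈ That} (Fin M) ℝ} (hDT : IsPinv (colSub A That) DT) :
    frob (X - extendRows That (DT * (A * X + W))) ≤
      ((1 + δ) * frob (restrictRows X ((Γᶜ : Finset (Fin N)) : Set (Fin N))) +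
        3 * frob W) / (1 - δ) ^ 2 := by
  have h1 := h.frob_restrictRows_compl_le hδ0 hδ hΓT hDΓ hX W hThatΓ hcard hsel
  have h2 := h.frob_sub_leastSquares_le hδ0 hδ
    ((Finset.card_le_card (Finset.union_subset_union_left hThatΓ)).trans hΓT) hDT hX W
  have hd : 0 < 1 - δ := by linarith
  have hw := frob_nonneg W
  have h3 : frob W / √(1 - δ) ≤ frob W / (1 - δ) := by
    refine div_le_div_of_nonneg_left hw hd ?_
    exact Real.le_sqrt_of_sq_le (by nlinarith)
  have h4 : frob W / (1 - δ) ≤ frob W / (1 - δ) ^ 2 :=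
    div_le_div_of_nonneg_left hw (by positivity) (by nlinarith)
  have h5 := mul_le_mul_of_nonneg_left h1 (by positivity : 0 ≤ 1 / (1 - δ))
  have h6 := mul_le_mul_of_nonneg_left h3 (by positivity : 0 ≤ 2 * (1 / (1 - δ)))
  have h7 : 2 * (1 / (1 - δ)) * (frob W / (1 - δ)) = 2 * (frob W / (1 - δ) ^ 2) := by
    field_simp
  have h8 (x : ℝ) : 1 / (1 - δ) * ((1 + δ) / (1 - δ) * x) = (1 + δ) * x / (1 - δ) ^ 2 := by
    field_simp
  rw [mul_add, h8] at h5
  rw [add_div, mul_div_assoc 3]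
  linarith

/-- The unnormalized error bound for an arbitrary signal `X` with row-sparse approximation
`restrictRows X S`. -/
lemma RIP.frob_sub_fusion_le_of_approx (h : RIP A s δ) (hδ0 : 0 ≤ δ) (hδ : δ < 1)
    {Γ S That : Finset (Fin N)} (hΓS : Γ.card + S.card ≤ s)
    {DΓ : Matrix {j // j ∈ Γ} (Fin M) ℝ} (hDΓ : IsPinv (colSub A Γ) DΓ)
    (X : Matrix (Fin N) (Fin L) ℝ) (W : Matrix (Fin M) (Fin L) ℝ)
    (hThatΓ : That ⊆ Γ) (hcard : S.card = That.card)
    (hsel : ∀ i ∈ That, ∀ j ∉ That, rowNorm (extendRows Γ (DΓ * (A * X + W))) j ≤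
      rowNorm (extendRows Γ (DΓ * (A * X + W))) i)
    {DT : Matrix {j // j ∈ That} (Fin M) ℝ} (hDT : IsPinv (colSub A That) DT) :
    frob (X - extendRows That (DT * (A * X + W))) ≤
      ((1 + δ) * frob (restrictRows X ((Γᶜ : Finset (Fin N)) : Set (Fin N))) + 3 * frob W +
        (3 * √(1 + δ) + 1) * frob (X - restrictRows X (S : Set (Fin N))) +
        3 * (√(1 + δ) / √s * norm21 (X - restrictRows X (S : Set (Fin N))))) / (1 - δ) ^ 2 := by
  set Y := restrictRows X (S : Set (Fin N)) with hY
  have hd : 0 < 1 - δ := by linarith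
  have hd2 : (1 - δ) ^ 2 ≤ 1 := by nlinarith
  have hw := frob_nonneg W
  have hE := frob_nonneg (X - Y)
  have hE21 : 0 ≤ norm21 (X - Y) := Finset.sum_nonneg fun i _ => rowNorm_nonneg _ i
  rcases Nat.eq_zero_or_pos s with rfl | hs
  · have hΓ0 : Γ = ∅ := Finset.card_eq_zero.1 (by omega)
    subst hΓ0
    have hT0 : That = ∅ := Finset.subset_empty.1 hThatΓ
    subst hT0
    have hz : extendRows ∅ (DT * (A * X + W)) = 0 := by
      ext i j
      simp [extendRows]
    have hX := frob_nonneg X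
    rw [hz, sub_zero, Finset.compl_empty, Finset.coe_univ, restrictRows_univ,
      le_div_iff₀ (by positivity)]
    have h1 : frob X * (1 - δ) ^ 2 ≤ frob X := mul_le_of_le_one_right hX hd2
    have h2 : 0 ≤ δ * frob X + 3 * frob W + (3 * √(1 + δ) + 1) * frob (X - Y) +
      3 * (√(1 + δ) / √(0 : ℕ) * norm21 (X - Y)) := by positivity
    linarith
  have hB : A * X + W = A * Y + (A * (X - Y) + W) := by
    rw [← add_assoc, ← Matrix.mul_add, add_sub_cancel]
  have hnoise := frob_add_le (A * (X - Y)) W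
  have hAE := h.frob_mul_le_add_norm21 hδ0 hs (X - Y)
  rw [hB] at hsel ⊢
  have hfus := h.frob_sub_fusion_le hδ0 hδ ((Finset.card_union_le Γ S).trans hΓS) hDΓ
    (fun i hi => restrictRows_apply_of_notMem X (mt Finset.mem_coe.1 hi))
    (A * (X - Y) + W) hThatΓ hcard hsel hDT
  have hYΓ : frob (restrictRows Y ((Γᶜ : Finset (Fin N)) : Set (Fin N))) ≤
      frob (restrictRows X ((Γᶜ : Finset (Fin N)) : Set (Fin N))) := by
    refine le_of_sq_le_sq ?_ (frob_nonneg _)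
    rw [frob_sq_restrictRows, frob_sq_restrictRows]
    exact Finset.sum_le_sum fun i _ =>
      pow_le_pow_left₀ (rowNorm_nonneg _ _) (rowNorm_restrictRows_le X _ i) 2
  have hYΓ' := mul_le_mul_of_nonneg_left hYΓ (by linarith : 0 ≤ 1 + δ)
  set Z := extendRows That (DT * (A * Y + (A * (X - Y) + W)))
  have htri := frob_add_le (X - Y) (Y - Z)
  rw [sub_add_sub_cancel] at htri
  rw [le_div_iff₀ (by positivity)] at hfus ⊢
  have h1 := mul_le_mul_of_nonneg_right htri (sq_nonneg (1 - δ))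
  have h2 : frob (X - Y) * (1 - δ) ^ 2 ≤ frob (X - Y) := mul_le_of_le_one_right hE hd2
  have h3 : √(1 + δ) * (norm21 (X - Y) / √s) = √(1 + δ) / √s * norm21 (X - Y) := by ring
  rw [mul_add, h3] at hAE
  linarith

end LeastSquares

theorem stmt14 {M N L R K : ℕ} (A : Matrix (Fin M) (Fin N) ℝ) (δ : ℝ)
    (hδ0 : 0 ≤ δ) (hδ : δ < 1) (hRIP : RIP A (R + K) δ)
    (X : Matrix (Fin N) (Fin L) ℝ)
    (S : Finset (Fin N)) (hS : S.card = K)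
    (hSdom : ∀ i ∈ S, ∀ j ∉ S, rowNorm X j ≤ rowNorm X i)
    (XK : Matrix (Fin N) (Fin L) ℝ) (hXK : XK = restrictRows X (S : Set (Fin N)))
    (Γ : Finset (Fin N)) (hΓ : Γ.card ≤ R)
    (DΓ : Matrix {j // j ∈ Γ} (Fin M) ℝ) (hDΓ : IsPinv (colSub A Γ) DΓ)
    (W B : Matrix (Fin M) (Fin L) ℝ) (hB : B = A * X + W)
    (V : Matrix (Fin N) (Fin L) ℝ)
    (hV : V = fun i j => if h : i ∈ Γ then (DΓ * B) ⟨i, h⟩ j else 0)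
    (That : Finset (Fin N)) (hThatΓ : That ⊆ Γ) (hThatK : That.card = K)
    (hsel : ∀ i ∈ That, ∀ j ∉ That, rowNorm V j ≤ rowNorm V i)
    (DT : Matrix {j // j ∈ That} (Fin M) ℝ) (hDT : IsPinv (colSub A That) DT)
    (Xhat : Matrix (Fin N) (Fin L) ℝ)
    (hXhat : Xhat = fun i j => if h : i ∈ That then (DT * B) ⟨i, h⟩ j else 0)
    (Ti : Finset (Fin N)) (Xhati : Matrix (Fin N) (Fin L) ℝ)
    (hXhati : ∀ i, i ∉ Ti → Xhati i = 0)
    (hXΓ : frob (restrictRows X {i | i ∉ Γ}) ≠ 0)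
    (hXTi : frob (restrictRows X {i | i ∉ Ti}) ≠ 0)
    (ηi ζ ξ : ℝ)
    (hη : ηi = frob (restrictRows X {i | i ∉ Γ}) / frob (restrictRows X {i | i ∉ Ti}))
    (hζ : ζ = frob W / frob (restrictRows X {i | i ∉ Γ}))
    (hξ : ξ = (3 * Real.sqrt (1 + δ) + 1) * frob (X - XK) /
        (3 * frob (restrictRows X {i | i ∉ Γ})) +
      (Real.sqrt (1 + δ) / Real.sqrt (R + K)) * norm21 (X - XK) /
        frob (restrictRows X {i | i ∉ Γ})) :
    frob (X - Xhat) ≤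
      ((1 + δ + 3 * ζ + 3 * ξ) / (1 - δ) ^ 2) * ηi * frob (X - Xhati) ∧
    (ηi < (1 - δ) ^ 2 / (1 + δ + 3 * ζ + 3 * ξ) →
      ((1 - δ) ^ 2 / ((1 + δ + 3 * ζ + 3 * ξ) * ηi)) ^ 2 * (frob (X - Xhat)) ^ 2 ≤
        (frob (X - Xhati)) ^ 2) := by
  have hcompl (U : Finset (Fin N)) : {i | i ∉ U} = ((Uᶜ : Finset (Fin N)) : Set (Fin N)) := by
    ext i
    simp
  have hcore : frob (X - Xhat) ≤
      (1 + δ + 3 * ζ + 3 * ξ) / (1 - δ) ^ 2 * frob (restrictRows X {i | i ∉ Γ}) := by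
    have hbound := hRIP.frob_sub_fusion_le_of_approx hδ0 hδ (Γ := Γ) (S := S) (That := That)
      (by omega) hDΓ X W hThatΓ (by omega) (by subst hB hV; exact hsel) hDT
    rw [← hcompl, ← hXK, ← hB] at hbound
    have hXhat' : Xhat = extendRows That (DT * B) := hXhat
    rw [hXhat']
    refine hbound.trans_eq ?_
    rw [hζ, hξ, Nat.cast_add]
    field_simp
    ring
  have hF : 0 < frob (restrictRows X {i | i ∉ Γ}) := (frob_nonneg _).lt_of_ne' hXΓ
  have hG : 0 < frob (restrictRows X {i | i ∉ Ti}) := (frob_nonneg _).lt_of_ne' hXTi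
  have hGH : frob (restrictRows X {i | i ∉ Ti}) ≤ frob (X - Xhati) := by
    have heq : restrictRows X {i | i ∉ Ti} = restrictRows (X - Xhati) {i | i ∉ Ti} := by
      ext i j
      by_cases hi : i ∈ Ti
      · simp [restrictRows, hi]
      · simp [restrictRows, hi, hXhati i hi]
    rw [heq]
    exact frob_restrictRows_le _ _
  have hη0 : 0 < ηi := hη ▸ div_pos hF hG
  have hζ0 : 0 ≤ ζ := hζ ▸ div_nonneg (frob_nonneg W) hF.le
  have hξ0 : 0 ≤ ξ := by
    have hE := frob_nonneg (X - XK)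
    have hE21 : 0 ≤ norm21 (X - XK) := Finset.sum_nonneg fun i _ => rowNorm_nonneg _ i
    rw [hξ]
    positivity
  have hC : 0 < 1 + δ + 3 * ζ + 3 * ξ := by positivity
  have hd : 0 < (1 - δ) ^ 2 := pow_pos (by linarith) 2
  have hFη : frob (restrictRows X {i | i ∉ Γ}) ≤ ηi * frob (X - Xhati) := by
    rw [hη, div_mul_eq_mul_div, le_div_iff₀ hG]
    exact mul_le_mul_of_nonneg_left hGH hF.le
  have hmain : frob (X - Xhat) ≤
      (1 + δ + 3 * ζ + 3 * ξ) / (1 - δ) ^ 2 * ηi * frob (X - Xhati) := by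
    rw [mul_assoc]
    exact hcore.trans (mul_le_mul_of_nonneg_left hFη (div_pos hC hd).le)
  refine ⟨hmain, fun _ => ?_⟩
  rw [← mul_pow]
  refine pow_le_pow_left₀ (mul_nonneg (by positivity) (frob_nonneg _)) ?_ 2
  rw [div_mul_eq_mul_div, div_le_iff₀ (mul_pos hC hη0)]
  calc (1 - δ) ^ 2 * frob (X - Xhat) ≤
      (1 - δ) ^ 2 * ((1 + δ + 3 * ζ + 3 * ξ) / (1 - δ) ^ 2 * ηi * frob (X - Xhati)) :=
        mul_le_mul_of_nonneg_left hmain hd.le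
    _ = frob (X - Xhati) * ((1 + δ + 3 * ζ + 3 * ξ) * ηi) := by
      have hd1 : 1 - δ ≠ 0 := by linarith
      field_simp
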